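/- Let K be a field and X a type with at least two distinct elements. Then the free Lie algebra FreeLieAlgebra K X is anticommutative: (1) every Lie ideal I of FreeLieAlgebra K X with I ≠ ⊥ satisfies ⁅I, I⁆ ≠ ⊥ (no nonzero abelian Lie ideal), and (2) for all Lie ideals I, J of FreeLieAlgebra K X with I ≠ ⊥ and J ≠ ⊥, I ⊓ J ≠ ⊥. -/

import Mathlib

attribute [local instance] LieRing.ofAssociativeRing

namespace FreeLieAlgebra

noncomputable section

variable {K : Type*} [Field K]

/-- The canonical map from the free Lie algebra to the free associative algebra. -/
def toFreeAlgebra (K : Type*) [Field K] (X : Type*) :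
    FreeLieAlgebra K X →ₗ⁅K⁆ FreeAlgebra K X :=
  lift K (FreeAlgebra.ι K)

@[simp]
theorem toFreeAlgebra_of {X : Type*} (x : X) :
    toFreeAlgebra K X (of K x) = FreeAlgebra.ι K x :=
  lift_of_apply _ _

/-- `IsBracket S n a` says that `a` is an iterated bracket of `n` generators taken from `S`. -/
inductive IsBracket {X : Type*} (S : Set X) : ℕ → FreeLieAlgebra K X → Prop
  | of {x : X} : x ∈ S → IsBracket S 1 (of K x)
  | lie {m n : ℕ} {a b : FreeLieAlgebra K X} :
      IsBracket S m a → IsBracket S n b → IsBracket S (m + n) ⁅a, b⁆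

section Filtration

variable {X : Type*}

theorem IsBracket.mono {S T : Set X} (h : S ⊆ T) {n : ℕ} {a : FreeLieAlgebra K X}
    (ha : IsBracket S n a) : IsBracket T n a := by
  induction ha with
  | of hx => exact .of (h hx)
  | lie _ _ iha ihb => exact iha.lie ihb

theorem IsBracket.pos {S : Set X} {n : ℕ} {a : FreeLieAlgebra K X} (ha : IsBracket S n a) :
    0 < n := by
  induction ha with
  | of => exact one_pos
  | lie => omega

theorem not_isBracket_empty {n : ℕ} {a : FreeLieAlgebra K X} : ¬ IsBracket (∅ : Set X) n a := by
  intro ha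
  induction ha with
  | of hx => exact hx
  | lie _ _ iha => exact iha

theorem IsBracket.exists_finset {S : Set X} {n : ℕ} {a : FreeLieAlgebra K X}
    (ha : IsBracket S n a) : ∃ T : Finset X, IsBracket (T : Set X) n a := by
  classical
  induction ha with
  | @of x hx => exact ⟨{x}, .of (by simp)⟩
  | lie _ _ iha ihb =>
    obtain ⟨T, hT⟩ := iha
    obtain ⟨U, hU⟩ := ihb
    exact ⟨T ∪ U, (hT.mono (by simp)).lie (hU.mono (by simp))⟩

/-- The span of all brackets of length less than `n` and of the brackets of length `n` in the
generators from `S`. -/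
def filtration (K : Type*) [Field K] {X : Type*} (S : Set X) (n : ℕ) :
    Submodule K (FreeLieAlgebra K X) :=
  Submodule.span K {a | (∃ k < n, IsBracket Set.univ k a) ∨ IsBracket S n a}

theorem IsBracket.mem_filtration {S : Set X} {n : ℕ} {a : FreeLieAlgebra K X}
    (ha : IsBracket S n a) : a ∈ filtration K S n :=
  Submodule.subset_span (Or.inr ha)

theorem filtration_mono {S T : Set X} (h : S ⊆ T) (n : ℕ) :
    filtration K S n ≤ filtration K T n :=
  Submodule.span_mono fun _ ha ↦ ha.imp_right (·.mono h)

theorem filtration_le_of_lt (S T : Set X) {m n : ℕ} (h : m < n) :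
    filtration K S m ≤ filtration K T n := by
  refine Submodule.span_mono ?_
  rintro a (⟨k, hk, ha⟩ | ha)
  · exact Or.inl ⟨k, hk.trans h, ha⟩
  · exact Or.inl ⟨m, h, ha.mono (Set.subset_univ _)⟩

theorem lie_mem_filtration {S : Set X} {m n : ℕ} {a b : FreeLieAlgebra K X}
    (ha : a ∈ filtration K S m) (hb : b ∈ filtration K S n) :
    ⁅a, b⁆ ∈ filtration K S (m + n) := by
  induction ha using Submodule.span_induction with
  | zero => simp
  | add _ _ _ _ h₁ h₂ => rw [add_lie]; exact add_mem h₁ h₂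
  | smul c _ _ h => rw [smul_lie]; exact Submodule.smul_mem _ c h
  | mem a ha =>
    induction hb using Submodule.span_induction with
    | zero => simp
    | add _ _ _ _ h₁ h₂ => rw [lie_add]; exact add_mem h₁ h₂
    | smul c _ _ h => rw [lie_smul]; exact Submodule.smul_mem _ c h
    | mem b hb =>
      refine Submodule.subset_span ?_
      rcases ha with ⟨k, hk, ha⟩ | ha <;> rcases hb with ⟨l, hl, hb⟩ | hb
      · exact Or.inl ⟨k + l, by omega, ha.lie hb⟩
      · exact Or.inl ⟨k + n, by omega, ha.lie (hb.mono (Set.subset_univ _))⟩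
      · exact Or.inl ⟨m + l, by omega, (ha.mono (Set.subset_univ _)).lie hb⟩
      · exact Or.inr (ha.lie hb)

theorem filtration_zero (S : Set X) : filtration K S 0 = ⊥ := by
  refine Submodule.span_eq_bot.2 ?_
  rintro a (⟨k, hk, -⟩ | ha)
  · omega
  · exact absurd ha.pos (lt_irrefl _)

theorem filtration_empty_le (n : ℕ) :
    filtration K (∅ : Set X) (n + 1) ≤ filtration K (Set.univ : Set X) n := by
  refine Submodule.span_le.2 ?_
  rintro a (⟨k, hk, ha⟩ | ha)
  · rcases Nat.lt_succ_iff_lt_or_eq.1 hk with h | rfl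
    · exact Submodule.subset_span (Or.inl ⟨k, h, ha⟩)
    · exact ha.mem_filtration
  · exact absurd ha not_isBracket_empty

theorem exists_finset_mem_filtration {n : ℕ} {a : FreeLieAlgebra K X}
    (ha : a ∈ filtration K (Set.univ : Set X) n) :
    ∃ S : Finset X, a ∈ filtration K (S : Set X) n := by
  classical
  induction ha using Submodule.span_induction with
  | zero => exact ⟨∅, zero_mem _⟩
  | add _ _ _ _ h₁ h₂ =>
    obtain ⟨S, hS⟩ := h₁
    obtain ⟨T, hT⟩ := h₂
    exact ⟨S ∪ T, add_mem (filtration_mono (by simp) n hS) (filtration_mono (by simp) n hT)⟩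
  | smul c _ _ h =>
    obtain ⟨S, hS⟩ := h
    exact ⟨S, Submodule.smul_mem _ c hS⟩
  | mem a ha =>
    rcases ha with h | h
    · exact ⟨∅, Submodule.subset_span (Or.inl h)⟩
    · obtain ⟨S, hS⟩ := h.exists_finset
      exact ⟨S, hS.mem_filtration⟩

theorem exists_mem_filtration (a : FreeLieAlgebra K X) :
    ∃ n, a ∈ filtration K (Set.univ : Set X) n := by
  let L : LieSubalgebra K (FreeLieAlgebra K X) :=
    { carrier := {a | ∃ n, a ∈ filtration K (Set.univ : Set X) n}
      zero_mem' := ⟨0, zero_mem _⟩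
      add_mem' := by
        rintro a b ⟨m, hm⟩ ⟨n, hn⟩
        exact ⟨m + n + 1, add_mem (filtration_le_of_lt _ _ (by omega) hm)
          (filtration_le_of_lt _ _ (by omega) hn)⟩
      smul_mem' := by
        rintro c a ⟨n, hn⟩
        exact ⟨n, Submodule.smul_mem _ c hn⟩
      lie_mem' := by
        rintro a b ⟨m, hm⟩ ⟨n, hn⟩
        exact ⟨m + n, lie_mem_filtration hm hn⟩ }
  let f : FreeLieAlgebra K X →ₗ⁅K⁆ L :=
    lift K fun x ↦ ⟨of K x, 1, (IsBracket.of (Set.mem_univ x)).mem_filtration⟩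
  have h : L.incl.comp f = LieHom.id := by
    ext x
    simp [f]
  have ha : ((f a : L) : FreeLieAlgebra K X) = a := DFunLike.congr_fun h a
  exact ha ▸ (f a).2

end Filtration

section Elimination

variable {X : Type*} (x : X)

/-- The free generators `(ad x)ⁿ y`, with `y ≠ x`, of the ideal of the free Lie algebra generated
by the generators different from `x`. -/
abbrev ElimGen (x : X) : Type _ := {y : X // y ≠ x} × ℕ

/-- The Lie algebra map sending `(y, n)` to `(ad x)ⁿ y`. -/
def elim (K : Type*) [Field K] (x : X) : FreeLieAlgebra K (ElimGen x) →ₗ⁅K⁆ FreeLieAlgebra K X :=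
  lift K fun z ↦ (fun a ↦ ⁅of K x, a⁆)^[z.2] (of K z.1.1)

theorem elim_of_zero (y : {y : X // y ≠ x}) : elim K x (of K (y, 0)) = of K y.1 := by
  simp [elim]

theorem elim_of_succ (y : {y : X // y ≠ x}) (n : ℕ) :
    elim K x (of K (y, n + 1)) = ⁅of K x, elim K x (of K (y, n))⁆ := by
  simp [elim, Function.iterate_succ_apply']

theorem lie_elim_isBracket {S : Set (ElimGen x)} {n : ℕ} {b : FreeLieAlgebra K (ElimGen x)}
    (hb : IsBracket S n b) :
    ∃ c ∈ filtration K (Set.univ : Set (ElimGen x)) n, ⁅of K x, elim K x b⁆ = elim K x c := by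
  induction hb with
  | @of z _ =>
    obtain ⟨y, k⟩ := z
    exact ⟨of K (y, k + 1), (IsBracket.of (Set.mem_univ _)).mem_filtration,
      (elim_of_succ x y k).symm⟩
  | @lie m n a b ha hb iha ihb =>
    obtain ⟨c, hc, hac⟩ := iha
    obtain ⟨d, hd, hbd⟩ := ihb
    refine ⟨⁅c, b⁆ + ⁅a, d⁆, add_mem
      (lie_mem_filtration hc (hb.mono (Set.subset_univ _)).mem_filtration)
      (lie_mem_filtration (ha.mono (Set.subset_univ _)).mem_filtration hd), ?_⟩
    rw [LieHom.map_lie, leibniz_lie, hac, hbd, map_add, LieHom.map_lie, LieHom.map_lie]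

theorem lie_elim_mem {S : Set (ElimGen x)} {n : ℕ} {b : FreeLieAlgebra K (ElimGen x)}
    (hb : b ∈ filtration K S n) :
    ∃ c ∈ filtration K (Set.univ : Set (ElimGen x)) n, ⁅of K x, elim K x b⁆ = elim K x c := by
  induction hb using Submodule.span_induction with
  | zero => exact ⟨0, zero_mem _, by simp⟩
  | add _ _ _ _ h₁ h₂ =>
    obtain ⟨c, hc, hac⟩ := h₁
    obtain ⟨d, hd, hbd⟩ := h₂
    exact ⟨c + d, add_mem hc hd, by simp [hac, hbd]⟩
  | smul t _ _ h =>
    obtain ⟨c, hc, hac⟩ := h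
    exact ⟨t • c, Submodule.smul_mem _ t hc, by simp [hac]⟩
  | mem b hb =>
    rcases hb with ⟨k, hk, hb⟩ | hb
    · obtain ⟨c, hc, hbc⟩ := lie_elim_isBracket x hb
      exact ⟨c, filtration_le_of_lt _ _ hk hc, hbc⟩
    · exact lie_elim_isBracket x hb

/-- The elimination generators that correspond to the generators in `S`. -/
def elimSet (S : Set X) : Set (ElimGen x) := {z | z.2 = 0 ∧ z.1.1 ∈ S}

theorem IsBracket.eq_of_or_mem_elim {S : Set X} {n : ℕ} {a : FreeLieAlgebra K X}
    (ha : IsBracket S n a) :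
    (n = 1 ∧ a = FreeLieAlgebra.of K x) ∨ ∃ b ∈ filtration K (elimSet x S) n, a = elim K x b := by
  induction ha with
  | @of y hy =>
    by_cases h : y = x
    · exact Or.inl ⟨rfl, by rw [h]⟩
    · exact Or.inr ⟨FreeLieAlgebra.of K (⟨y, h⟩, 0),
        (IsBracket.of (show _ ∈ elimSet x S from ⟨rfl, hy⟩)).mem_filtration,
        (elim_of_zero x ⟨y, h⟩).symm⟩
  | @lie m n a b _ _ iha ihb =>
    right
    rcases iha with ⟨rfl, rfl⟩ | ⟨c, hc, rfl⟩ <;> rcases ihb with ⟨rfl, rfl⟩ | ⟨d, hd, rfl⟩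
    · exact ⟨0, zero_mem _, by simp⟩
    · obtain ⟨e, he, hde⟩ := lie_elim_mem x hd
      exact ⟨e, filtration_le_of_lt _ _ (by omega) he, hde⟩
    · obtain ⟨e, he, hce⟩ := lie_elim_mem x hc
      exact ⟨-e, neg_mem (filtration_le_of_lt _ _ (by omega) he), by
        rw [← lie_skew, hce, map_neg]⟩
    · exact ⟨⁅c, d⁆, lie_mem_filtration hc hd, by rw [LieHom.map_lie]⟩

theorem exists_eq_smul_add_elim {S : Set X} {n : ℕ} {a : FreeLieAlgebra K X}
    (ha : a ∈ filtration K S n) :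
    ∃ c : K, ∃ b ∈ filtration K (elimSet x S) n, a = c • of K x + elim K x b := by
  induction ha using Submodule.span_induction with
  | zero => exact ⟨0, 0, zero_mem _, by simp⟩
  | add _ _ _ _ h₁ h₂ =>
    obtain ⟨c, b, hb, rfl⟩ := h₁
    obtain ⟨d, e, he, rfl⟩ := h₂
    exact ⟨c + d, b + e, add_mem hb he, by rw [map_add]; module⟩
  | smul t _ _ h =>
    obtain ⟨c, b, hb, rfl⟩ := h
    exact ⟨t * c, t • b, Submodule.smul_mem _ t hb, by rw [map_smul]; module⟩
  | mem a ha =>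
    rcases ha with ⟨k, hk, ha⟩ | ha
    · rcases ha.eq_of_or_mem_elim x with ⟨-, rfl⟩ | ⟨b, hb, rfl⟩
      · exact ⟨1, 0, zero_mem _, by simp⟩
      · exact ⟨0, b, filtration_le_of_lt _ _ hk hb, by simp⟩
    · rcases ha.eq_of_or_mem_elim x with ⟨-, rfl⟩ | ⟨b, hb, rfl⟩
      · exact ⟨1, 0, zero_mem _, by simp⟩
      · exact ⟨0, b, hb, by simp⟩

/-- The algebra map sending `(y, n)` to `(ad x)ⁿ y`. -/
def elimFreeAlgebra (K : Type*) [Field K] (x : X) :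
    FreeAlgebra K (ElimGen x) →ₐ[K] FreeAlgebra K X :=
  FreeAlgebra.lift K fun z ↦ toFreeAlgebra K X (elim K x (of K z))

theorem elimFreeAlgebra_toFreeAlgebra (b : FreeLieAlgebra K (ElimGen x)) :
    elimFreeAlgebra K x (toFreeAlgebra K (ElimGen x) b) = toFreeAlgebra K X (elim K x b) := by
  have h : ((elimFreeAlgebra K x : _ →ₗ⁅K⁆ _).comp (toFreeAlgebra K (ElimGen x))) =
      (toFreeAlgebra K X).comp (elim K x) := by
    ext z
    simp [elimFreeAlgebra]
  exact DFunLike.congr_fun h b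

/-- The algebra map to the trivial square-zero extension whose second component is the derivation
sending `(y, n)` to `(y, n + 1)`. -/
def shiftHom (K : Type*) [Field K] (x : X) :
    FreeAlgebra K (ElimGen x) →ₐ[K]
      TrivSqZeroExt (FreeAlgebra K (ElimGen x)) (FreeAlgebra K (ElimGen x)) :=
  FreeAlgebra.lift K fun z ↦
    TrivSqZeroExt.inl (FreeAlgebra.ι K z) + TrivSqZeroExt.inr (FreeAlgebra.ι K (z.1, z.2 + 1))

theorem fst_shiftHom (t : FreeAlgebra K (ElimGen x)) : (shiftHom K x t).fst = t := by
  have h : (TrivSqZeroExt.fstHom K (FreeAlgebra K (ElimGen x)) (FreeAlgebra K (ElimGen x))).comp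
      (shiftHom K x) = AlgHom.id K _ := by
    ext z
    simp [shiftHom]
  exact DFunLike.congr_fun h t

/-- The derivation sending `(y, n)` to `(y, n + 1)`. -/
def shift (K : Type*) [Field K] (x : X) : Module.End K (FreeAlgebra K (ElimGen x)) where
  toFun t := (shiftHom K x t).snd
  map_add' := by simp
  map_smul' := by simp

theorem shift_ι (y : {y : X // y ≠ x}) (n : ℕ) :
    shift K x (FreeAlgebra.ι K (y, n)) = FreeAlgebra.ι K (y, n + 1) := by
  simp [shift, shiftHom]

theorem shift_mul (s t : FreeAlgebra K (ElimGen x)) :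
    shift K x (s * t) = s * shift K x t + shift K x s * t := by
  simp [shift, fst_shiftHom]

open Classical in
/-- The action of the free algebra in which `x` acts by the shift derivation and every other
generator `y` by left multiplication by `(y, 0)`. -/
def elimRep (K : Type*) [Field K] (x : X) :
    FreeAlgebra K X →ₐ[K] Module.End K (FreeAlgebra K (ElimGen x)) :=
  FreeAlgebra.lift K fun y ↦
    if h : y = x then shift K x else LinearMap.mulLeft K (FreeAlgebra.ι K (⟨y, h⟩, 0))

theorem elimRep_elim_of (y : {y : X // y ≠ x}) (n : ℕ) :
    elimRep K x (toFreeAlgebra K X (elim K x (of K (y, n)))) =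
      LinearMap.mulLeft K (FreeAlgebra.ι K (y, n)) := by
  induction n with
  | zero => simp [elim_of_zero, elimRep, y.2]
  | succ n ih =>
    rw [elim_of_succ, LieHom.map_lie, LieRing.of_associative_ring_bracket, map_sub, map_mul,
      map_mul, ih, toFreeAlgebra_of]
    ext t
    simp [elimRep, shift_mul, shift_ι]

theorem elimFreeAlgebra_injective : Function.Injective (elimFreeAlgebra K x) := by
  have h : (elimRep K x).comp (elimFreeAlgebra K x) = Algebra.lmul K _ := by
    ext1
    ext1 ⟨y, n⟩
    refine Eq.trans (by simp [elimFreeAlgebra]) ((elimRep_elim_of x y n).trans ?_)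
    ext t
    simp
  intro s t hst
  have := DFunLike.congr_fun h s
  rw [AlgHom.comp_apply, hst, ← AlgHom.comp_apply, h] at this
  simpa using (DFunLike.congr_fun this 1).symm

theorem eq_elim_of_toFreeAlgebra_eq_zero {S : Set X} {n : ℕ} {a : FreeLieAlgebra K X}
    (ha : a ∈ filtration K S n) (h : toFreeAlgebra K X a = 0) :
    ∃ b ∈ filtration K (elimSet x S) n, toFreeAlgebra K (ElimGen x) b = 0 ∧ a = elim K x b := by
  classical
  obtain ⟨c, b, hb, rfl⟩ := exists_eq_smul_add_elim x ha
  let ε : FreeAlgebra K X →ₐ[K] K := FreeAlgebra.lift K fun y ↦ if y = x then 1 else 0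
  have hε : ((ε : _ →ₗ⁅K⁆ K).comp (toFreeAlgebra K X)).comp (elim K x) = 0 := by
    ext ⟨y, n⟩
    cases n with
    | zero => simp [elim_of_zero, ε, y.2]
    | succ n => simp [elim_of_succ, LieRing.of_associative_ring_bracket, mul_comm]
  have hc : c = 0 := by
    have h₁ : ε (toFreeAlgebra K X (elim K x b)) = 0 := DFunLike.congr_fun hε b
    simpa [h₁, ε] using congrArg ε h
  subst hc
  refine ⟨b, hb, elimFreeAlgebra_injective x ?_, by simp⟩
  rw [elimFreeAlgebra_toFreeAlgebra, map_zero]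
  simpa using h

end Elimination

theorem eq_zero_of_mem_filtration_of_toFreeAlgebra_eq_zero (n : ℕ) {X : Type*}
    {a : FreeLieAlgebra K X} (ha : a ∈ filtration K (Set.univ : Set X) n)
    (h : toFreeAlgebra K X a = 0) : a = 0 := by
  induction n generalizing X with
  | zero => simpa [filtration_zero] using ha
  | succ n ih =>
    suffices key : ∀ (r : ℕ) {X : Type _} (S : Set X) {a : FreeLieAlgebra K X}, S.Finite →
        S.ncard = r → a ∈ filtration K S (n + 1) → toFreeAlgebra K X a = 0 → a = 0 by
      obtain ⟨S, hS⟩ := exists_finset_mem_filtration ha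
      exact key _ (S : Set X) S.finite_toSet rfl hS h
    clear ha h a X
    intro r
    induction r with
    | zero =>
      intro X S a hS hr ha h
      rw [Set.ncard_eq_zero hS] at hr
      subst hr
      exact ih (filtration_empty_le n ha) h
    | succ r ihr =>
      intro X S a hS hr ha h
      obtain ⟨x, hx⟩ : S.Nonempty := by
        rw [← Set.ncard_pos hS]
        omega
      obtain ⟨b, hb, hb0, rfl⟩ := eq_elim_of_toFreeAlgebra_eq_zero x ha h
      have himage : (fun z : ElimGen x ↦ z.1.1) '' elimSet x S = S \ {x} := by
        ext y
        constructor
        · rintro ⟨⟨z, k⟩, ⟨-, hz⟩, rfl⟩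
          exact ⟨hz, z.2⟩
        · rintro ⟨hy, hyx⟩
          exact ⟨(⟨y, hyx⟩, 0), ⟨rfl, hy⟩, rfl⟩
      have hinj : Set.InjOn (fun z : ElimGen x ↦ z.1.1) (elimSet x S) := by
        rintro ⟨y, k⟩ ⟨hk, -⟩ ⟨z, l⟩ ⟨hl, -⟩ hyz
        exact Prod.ext (Subtype.ext hyz) (hk.trans hl.symm)
      have hfin : (elimSet x S).Finite :=
        Set.Finite.of_finite_image (himage ▸ hS.subset Set.sdiff_subset) hinj
      have hcard : (elimSet x S).ncard = r := by
        rw [← hinj.ncard_image, himage, Set.ncard_sdiff_singleton_of_mem hx, hr,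
          Nat.add_sub_cancel]
      rw [ihr _ hfin hcard hb hb0, map_zero]

theorem toFreeAlgebra_injective (X : Type*) : Function.Injective (toFreeAlgebra K X) := by
  refine (injective_iff_map_eq_zero _).2 fun a ha ↦ ?_
  obtain ⟨n, hn⟩ := exists_mem_filtration a
  exact eq_zero_of_mem_filtration_of_toFreeAlgebra_eq_zero n hn ha

end

end FreeLieAlgebra

namespace MonoidAlgebra

variable {K M : Type*} [Field K] [LinearOrder M]

/-- `u` is the largest element of the support of `a`. -/
def IsLeading (a : MonoidAlgebra K M) (u : M) : Prop :=
  IsGreatest (a.coeff.support : Set M) u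

theorem exists_isLeading {a : MonoidAlgebra K M} (ha : a ≠ 0) : ∃ u, IsLeading a u :=
  ⟨_, Finset.isGreatest_max' _ (Finsupp.support_nonempty_iff.2 (by simpa using ha))⟩

theorem isLeading_single (m : M) : IsLeading (single m (1 : K)) m := by
  constructor
  · simp
  · intro w hw
    exact (Finset.mem_singleton.1 (Finsupp.support_single_subset hw)).le

theorem IsLeading.sub_of_lt {a b : MonoidAlgebra K M} {u v : M} (ha : IsLeading a u)
    (hb : IsLeading b v) (h : u < v) : IsLeading (b - a) v := by
  have hv : a.coeff v = 0 := by
    by_contra hne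
    exact (ha.2 (by simpa using hne)).not_gt h
  constructor
  · simpa [hv] using hb.1
  · intro w hw
    by_contra hlt
    rw [not_le] at hlt
    have h₁ : a.coeff w = 0 := by
      by_contra hne
      exact (ha.2 (by simpa using hne)).not_gt (h.trans hlt)
    have h₂ : b.coeff w = 0 := by
      by_contra hne
      exact (hb.2 (by simpa using hne)).not_gt hlt
    simp [h₁, h₂] at hw

theorem IsLeading.sub_of_ne {a b : MonoidAlgebra K M} {u v : M} (ha : IsLeading a u)
    (hb : IsLeading b v) (h : u ≠ v) : IsLeading (a - b) u ∨ IsLeading (a - b) v := by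
  rcases h.lt_or_gt with h | h
  · right
    simpa only [IsLeading, ← neg_sub b a, coeff_neg, Finsupp.support_neg] using ha.sub_of_lt hb h
  · exact Or.inl (hb.sub_of_lt ha h)

variable [Monoid M]

theorem IsLeading.mul [MulLeftStrictMono M] [MulRightStrictMono M] {a b : MonoidAlgebra K M}
    {u v : M} (ha : IsLeading a u) (hb : IsLeading b v) : IsLeading (a * b) (u * v) := by
  classical
  have hle {p q : M} (hp : p ≤ u) (hq : q ≤ v) : p * q ≤ u * v := by
    rcases hp.lt_or_eq with hp | rfl <;> rcases hq.lt_or_eq with hq | rfl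
    · exact (mul_lt_mul_of_lt_of_lt hp hq).le
    · exact (mul_lt_mul_left hp _).le
    · exact (mul_lt_mul_right hq _).le
    · exact le_rfl
  constructor
  · have huniq : UniqueMul a.coeff.support b.coeff.support u v := by
      intro p q hp hq hpq
      have hp := ha.2 hp
      have hq := hb.2 hq
      rcases hp.lt_or_eq with hp | rfl <;> rcases hq.lt_or_eq with hq | rfl
      · exact absurd hpq (mul_lt_mul_of_lt_of_lt hp hq).ne
      · exact absurd hpq (mul_lt_mul_left hp _).ne
      · exact absurd hpq (mul_lt_mul_right hq _).ne
      · exact ⟨rfl, rfl⟩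
    have hu : a.coeff u ≠ 0 := by simpa using ha.1
    have hv : b.coeff v ≠ 0 := by simpa using hb.1
    simpa [coeff_mul_mul_of_uniqueMul huniq] using ⟨hu, hv⟩
  · intro w hw
    by_contra hlt
    refine Finsupp.mem_support_iff.1 hw ?_
    rw [coeff_mul]
    refine Finset.sum_eq_zero fun p hp ↦ Finset.sum_eq_zero fun q hq ↦ if_neg ?_
    rintro rfl
    exact hlt (hle (ha.2 hp) (hb.2 hq))

theorem IsLeading.commute [MulLeftStrictMono M] [MulRightStrictMono M] {a b : MonoidAlgebra K M}
    {u v : M} (ha : IsLeading a u) (hb : IsLeading b v) (h : Commute a b) : Commute u v := by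
  have h₁ := ha.mul hb
  rw [h.eq] at h₁
  exact IsGreatest.unique h₁ (hb.mul ha)

end MonoidAlgebra

namespace FreeMonoid

variable {X : Type*}

theorem eq_replicate_of_append_replicate_comm {t : X} {n : ℕ} (hn : n ≠ 0) :
    ∀ {v : List X}, v ++ List.replicate n t = List.replicate n t ++ v →
      v = List.replicate v.length t
  | [], _ => rfl
  | c :: v, h => by
    obtain ⟨n, rfl⟩ := Nat.exists_eq_succ_of_ne_zero hn
    obtain ⟨rfl, h⟩ : c = t ∧ v ++ List.replicate (n + 1) t = List.replicate n t ++ c :: v := by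
      simpa [List.replicate_succ] using h
    have h' : v ++ List.replicate (n + 1) c = List.replicate (n + 1) c ++ v := by
      rw [h, List.replicate_succ']
      simp
    rw [List.length_cons, List.replicate_succ, ← eq_replicate_of_append_replicate_comm hn h']

theorem eq_of_pow_of_commute {t : X} {n : ℕ} (hn : n ≠ 0) {v : FreeMonoid X}
    (h : Commute v (of t ^ n)) : v = of t ^ v.length := by
  have hpow (k : ℕ) : toList (of t ^ k) = List.replicate k t := by
    induction k with
    | zero => rfl
    | succ k ih => rw [pow_succ, toList_mul, ih, List.replicate_succ']; rfl
  have h' := congrArg toList h.eq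
  rw [toList_mul, toList_mul, hpow] at h'
  exact toList.injective ((eq_replicate_of_append_replicate_comm hn h').trans (hpow _).symm)

theorem eq_of_pow_of_commute_of {t : X} {v : FreeMonoid X} (h : Commute v (of t)) :
    v = of t ^ v.length :=
  eq_of_pow_of_commute one_ne_zero (by simpa using h)

theorem commute_of_of_commute {t : X} {u v : FreeMonoid X} (hu : u ≠ 1) (h : Commute u v)
    (htu : Commute u (of t)) : Commute v (of t) := by
  rw [eq_of_pow_of_commute_of htu] at h
  rw [eq_of_pow_of_commute (by simpa using hu) h.symm]
  exact Commute.pow_self _ _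

theorem eq_one_of_commute_of {x y : X} (hxy : x ≠ y) {v : FreeMonoid X} (hx : Commute v (of x))
    (hy : Commute v (of y)) : v = 1 := by
  by_contra hv
  have h := commute_of_of_commute hv hx hy
  have := congrArg toList h.eq
  simp [toList_mul] at this
  exact hxy this.1

/-- The degree-lexicographic order on words. -/
abbrev degLex (X : Type*) [LinearOrder X] : LinearOrder (FreeMonoid X) :=
  LinearOrder.lift' (fun w ↦ toLex (w.length, toList w)) fun _ _ h ↦
    toList.injective (congrArg Prod.snd (toLex.injective h))

theorem degLex_lt_iff [LinearOrder X] {v w : FreeMonoid X} :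
    (degLex X).lt v w ↔
      v.length < w.length ∨ v.length = w.length ∧ toList v < toList w :=
  Prod.Lex.toLex_lt_toLex

theorem append_lt_append_right_of_length_eq [LinearOrder X] (t : List X) :
    ∀ v w : List X, v.length = w.length → v < w → v ++ t < w ++ t
  | [], [], _, h => absurd h (lt_irrefl _)
  | a :: v, b :: w, hl, h => by
    rw [List.cons_lt_cons_iff] at h
    rw [List.cons_append, List.cons_append, List.cons_lt_cons_iff]
    exact h.imp_right fun h ↦
      ⟨h.1, append_lt_append_right_of_length_eq t v w (by simpa using hl) h.2⟩

theorem degLex_mulLeftStrictMono [LinearOrder X] :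
    letI := degLex X; MulLeftStrictMono (FreeMonoid X) := by
  let := degLex X
  refine ⟨fun u v w h ↦ degLex_lt_iff.2 ?_⟩
  rcases degLex_lt_iff.1 h with h | ⟨h, hlt⟩
  · exact Or.inl (by simpa using h)
  · exact Or.inr ⟨by simpa using h, List.append_left_lt hlt⟩

theorem degLex_mulRightStrictMono [LinearOrder X] :
    letI := degLex X; MulRightStrictMono (FreeMonoid X) := by
  let := degLex X
  refine ⟨fun u v w h ↦ degLex_lt_iff.2 ?_⟩
  rcases degLex_lt_iff.1 h with h | ⟨h, hlt⟩
  · exact Or.inl (by simpa [Function.swap] using h)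
  · exact Or.inr ⟨by simpa [Function.swap] using h,
      append_lt_append_right_of_length_eq _ _ _ h hlt⟩

theorem one_le_degLex [LinearOrder X] (v : FreeMonoid X) : (degLex X).le 1 v := by
  let := degLex X
  rcases eq_or_ne v 1 with rfl | h
  · exact le_refl (1 : FreeMonoid X)
  · exact le_of_lt (degLex_lt_iff.2 (Or.inl (by
      simpa [Nat.pos_iff_ne_zero] using h)))

end FreeMonoid

namespace FreeLieAlgebra

open FreeMonoid (degLex)

variable {K : Type*} [Field K] {X : Type*}

/-- The canonical map from the free Lie algebra to the monoid algebra of the free monoid. -/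
noncomputable def toMonoidAlgebra (K : Type*) [Field K] (X : Type*) :
    FreeLieAlgebra K X →ₗ⁅K⁆ MonoidAlgebra K (FreeMonoid X) :=
  AlgHom.toLieHom (FreeAlgebra.equivMonoidAlgebraFreeMonoid (R := K) (X := X)).toAlgHom |>.comp
    (toFreeAlgebra K X)

theorem toMonoidAlgebra_of (x : X) :
    toMonoidAlgebra K X (of K x) = MonoidAlgebra.single (FreeMonoid.of x) 1 := by
  simp [toMonoidAlgebra, FreeAlgebra.equivMonoidAlgebraFreeMonoid]

theorem toMonoidAlgebra_injective : Function.Injective (toMonoidAlgebra K X) :=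
  FreeAlgebra.equivMonoidAlgebraFreeMonoid.injective.comp (toFreeAlgebra_injective X)

theorem commute_toMonoidAlgebra {a b : FreeLieAlgebra K X} (h : ⁅a, b⁆ = 0) :
    Commute (toMonoidAlgebra K X a) (toMonoidAlgebra K X b) := by
  have := congrArg (toMonoidAlgebra K X) h
  rwa [LieHom.map_lie, map_zero, LieRing.of_associative_ring_bracket, sub_eq_zero] at this

theorem not_isLeading_toMonoidAlgebra_one [LinearOrder X] (a : FreeLieAlgebra K X) :
    letI := degLex X; ¬ MonoidAlgebra.IsLeading (toMonoidAlgebra K X a) 1 := by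
  let := degLex X
  intro h
  let ε : MonoidAlgebra K (FreeMonoid X) →ₐ[K] K :=
    MonoidAlgebra.lift K K (FreeMonoid X) (FreeMonoid.lift 0)
  have hε : (ε : _ →ₗ⁅K⁆ K).comp (toMonoidAlgebra K X) = 0 := by
    ext x
    simp [ε, toMonoidAlgebra_of]
  have ha : toMonoidAlgebra K X a =
      MonoidAlgebra.single 1 ((toMonoidAlgebra K X a).coeff 1) := by
    classical
    ext w
    by_cases hw : w = 1
    · simp [hw]
    · rw [MonoidAlgebra.coeff_single, Finsupp.single_apply, if_neg (Ne.symm hw)]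
      by_contra hne
      exact hw ((h.2 (by simpa using hne)).antisymm (FreeMonoid.one_le_degLex w))
  have h0 : ε (toMonoidAlgebra K X a) = 0 := DFunLike.congr_fun hε a
  rw [ha] at h0
  have h1 := h.1
  simp [ε] at h0 h1
  exact h1 h0

theorem exists_mem_ne_zero {I : LieIdeal K (FreeLieAlgebra K X)} (hI : I ≠ ⊥) :
    ∃ a ∈ I, a ≠ 0 := by
  by_contra! h
  exact hI ((LieSubmodule.eq_bot_iff I).2 h)

open MonoidAlgebra in
theorem lie_ne_bot {x y : X} (hxy : x ≠ y) {I J : LieIdeal K (FreeLieAlgebra K X)} (hI : I ≠ ⊥)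
    (hJ : J ≠ ⊥) : ⁅I, J⁆ ≠ (⊥ : LieIdeal K (FreeLieAlgebra K X)) := by
  intro hIJ
  rw [LieSubmodule.lie_eq_bot_iff] at hIJ
  obtain ⟨a, haI, ha⟩ := exists_mem_ne_zero hI
  obtain ⟨b, hbJ, hb⟩ := exists_mem_ne_zero hJ
  obtain ⟨_, -⟩ := exists_wellFoundedLT X
  let := degLex X
  have := FreeMonoid.degLex_mulLeftStrictMono (X := X)
  have := FreeMonoid.degLex_mulRightStrictMono (X := X)
  obtain ⟨u, hu⟩ := exists_isLeading ((map_ne_zero_iff _ toMonoidAlgebra_injective).2 ha)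
  obtain ⟨v, hv⟩ := exists_isLeading ((map_ne_zero_iff _ toMonoidAlgebra_injective).2 hb)
  have hu1 : u ≠ 1 := by
    rintro rfl
    exact not_isLeading_toMonoidAlgebra_one a hu
  have hv1 : v ≠ 1 := by
    rintro rfl
    exact not_isLeading_toMonoidAlgebra_one b hv
  have huv : Commute u v := hu.commute hv (commute_toMonoidAlgebra (hIJ a haI b hbJ))
  have key (t : X) : Commute v (FreeMonoid.of t) := by
    by_contra hne
    have hcomm := commute_toMonoidAlgebra (hIJ a haI ⁅of K t, b⁆ (J.lie_mem hbJ))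
    rw [LieHom.map_lie, toMonoidAlgebra_of, LieRing.of_associative_ring_bracket] at hcomm
    have ht : IsLeading (single (FreeMonoid.of t) (1 : K)) (FreeMonoid.of t) := isLeading_single _
    refine hne (FreeMonoid.commute_of_of_commute hu1 huv ?_)
    rcases (ht.mul hv).sub_of_ne (hv.mul ht) fun h ↦ hne h.symm with h | h
    · have h := (hu.commute h hcomm).eq
      refine mul_right_cancel (b := v) ?_
      rw [mul_assoc, h, mul_assoc, mul_assoc, huv.eq]
    · have h := (hu.commute h hcomm).eq
      refine mul_left_cancel (a := v) ?_
      rw [← mul_assoc, ← huv.eq, mul_assoc, h, mul_assoc]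
  exact hv1 (FreeMonoid.eq_one_of_commute_of hxy (key x) (key y))

end FreeLieAlgebra

theorem freeLieAlgebra_anticommutative
    (K : Type*) (X : Type*) [Field K] (x y : X) (hxy : x ≠ y) :
    (∀ I : LieIdeal K (FreeLieAlgebra K X), I ≠ ⊥ → ⁅I, I⁆ ≠ (⊥ : LieIdeal K (FreeLieAlgebra K X))) ∧
    (∀ I J : LieIdeal K (FreeLieAlgebra K X), I ≠ ⊥ → J ≠ ⊥ → I ⊓ J ≠ ⊥) := by
  refine ⟨fun I hI ↦ FreeLieAlgebra.lie_ne_bot hxy hI hI, fun I J hI hJ h ↦ ?_⟩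
  refine FreeLieAlgebra.lie_ne_bot hxy hI hJ (eq_bot_iff.2 ?_)
  exact h ▸ LieSubmodule.lie_le_inf I J
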